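/- Let (J,Q,1) be a weak quadratic Jordan algebra over a field k of characteristic different from 2, and suppose that for every a ∈ J the map Q_{1,a} is an anti-derivation of J. Define a multiplication on J by a · b := (1/2)·(a·Q_{1,b}). Then (J, +, ·) is a linear Jordan algebra: the multiplication is commutative, 1 is a two-sided unit, and the Jordan identity a² · (b · a) = (a² · b) · a holds for all a, b ∈ J. -/

import Mathlib

/-!
Write `L_a x = x·Q_{1,a}`, so that `a · b = ½ L_b a`. The axiom QJ2 at `a = 1` says
`L_x b = 1·Q_{b,x}`, so `L_x b = L_b x`; this gives commutativity, and the unit law follows from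
`Q_{1,1} = 2 Q_1 = 2`.

The anti-derivation law for `L_c` on `1·Q_a`, where `1·Q_a = a²`, yields `2 Q_a = L_a² - L_{a²}`
(`two_smul_Q`). The law for `L_a` on `x·Q_a` reads `Q_a L_a + L_a Q_a = 2 Q_{a,a²}`, while QJ2
gives `Q_{a,a²} = L_a Q_a` (maps composed left to right); hence `L_a` commutes with `Q_a`
(`mulOne_Q_comm`). Comparing the two, `L_a` commutes with `L_{a²}`, which is the Jordan identity.
-/

/-- A weak quadratic Jordan algebra `(J, Q, 1)` over a field `k`.
Endomorphisms act on the right: `x·Q_a` is `Q a x`; a paper product `A B`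
(apply `A`, then `B`) corresponds to the Mathlib product `B * A`. -/
structure WeakQuadraticJordan (k J : Type*) [Field k] [AddCommGroup J]
    [Module k J] where
  Q : J → Module.End k J
  one : J
  one_ne_zero : one ≠ 0
  Q_smul : ∀ (t : k) (a : J), Q (t • a) = (t ^ 2) • Q a
  Qbil : J →ₗ[k] J →ₗ[k] Module.End k J
  Qbil_apply : ∀ a b : J, Qbil a b = Q (a + b) - Q a - Q b
  QJ1 : Q one = 1
  QJ2 : ∀ a b x : J, Qbil a (Q a x) b = Q a (Qbil b x a)
  QJ3 : ∀ a b : J, Q (Q a b) = Q a * Q b * Q a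

namespace WeakQuadraticJordan

variable {k J : Type*} [Field k] [AddCommGroup J] [Module k J]

/-- `V W a b` is the endomorphism `V_{a,b} : x ↦ b·Q_{a,x}`. -/
def V (W : WeakQuadraticJordan k J) (a b : J) : Module.End k J where
  toFun x := W.Qbil a x b
  map_add' x y := by simp
  map_smul' t x := by simp

/-- `δ` is an `ε`-derivation: `δ(a·Q_b) = ε·δ(a)·Q_b + a·Q_{b,δ(b)}`. -/
def IsEpsDerivation (W : WeakQuadraticJordan k J) (ε : k) (δ : Module.End k J) : Prop :=
  ∀ a b : J, δ (W.Q b a) = ε • W.Q b (δ a) + W.Qbil b (δ b) a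

/-- Every nonzero element is invertible (`Q_a` is a unit of `End k J`). -/
def IsDivision (W : WeakQuadraticJordan k J) : Prop :=
  ∀ a : J, a ≠ 0 → IsUnit (W.Q a)

end WeakQuadraticJordan


/-- The multiplication `a · b := (1/2)·(a·Q_{1,b})`. -/
def WeakQuadraticJordan.jmul {k J : Type*} [Field k] [AddCommGroup J] [Module k J]
    (W : WeakQuadraticJordan k J) (a b : J) : J :=
  (2 : k)⁻¹ • W.Qbil W.one b a

namespace WeakQuadraticJordan

variable {k J : Type*} [Field k] [AddCommGroup J] [Module k J]

theorem Qbil_comm (W : WeakQuadraticJordan k J) (a b : J) : W.Qbil a b = W.Qbil b a := by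
  rw [W.Qbil_apply, W.Qbil_apply, add_comm a b]
  abel

theorem Qbil_self (W : WeakQuadraticJordan k J) (a : J) : W.Qbil a a = (2 : k) • W.Q a := by
  rw [W.Qbil_apply, ← two_smul k a, W.Q_smul]
  module

/-- QJ2 at the unit element. -/
theorem Qbil_one_apply (W : WeakQuadraticJordan k J) (x b : J) :
    W.Qbil W.one x b = W.Qbil b x W.one := by
  simpa [W.QJ1] using W.QJ2 W.one b x

/-- The product `b·Q_{1,x}` is symmetric in its two arguments. -/
theorem Qbil_one_swap (W : WeakQuadraticJordan k J) (x b : J) :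
    W.Qbil W.one x b = W.Qbil W.one b x := by
  rw [W.Qbil_one_apply, W.Qbil_one_apply, W.Qbil_comm]

theorem Qbil_one_one (W : WeakQuadraticJordan k J) (x : J) :
    W.Qbil W.one x W.one = (2 : k) • x := by
  rw [W.Qbil_one_swap, W.Qbil_self, W.QJ1]
  simp

theorem Qbil_one_self (W : WeakQuadraticJordan k J) (a : J) :
    W.Qbil W.one a a = (2 : k) • W.Q a W.one := by
  rw [W.Qbil_one_apply, W.Qbil_self]
  simp

/-- `2 Q_a = L_a² - L_{a²}`, from the anti-derivation `L_c` applied to `a² = 1·Q_a`. -/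
theorem two_smul_Q (W : WeakQuadraticJordan k J)
    (hanti : ∀ a : J, W.IsEpsDerivation (-1) (W.Qbil W.one a)) (a c : J) :
    (2 : k) • W.Q a c =
      W.Qbil W.one a (W.Qbil W.one a c) - W.Qbil W.one (W.Q a W.one) c := by
  have h := hanti c W.one a
  rw [W.Qbil_one_one, map_smul, ← W.Qbil_one_apply, W.Qbil_one_swap c (W.Q a W.one),
    W.Qbil_one_swap c a, W.Qbil_one_swap (W.Qbil W.one a c) a] at h
  rw [h]
  module

/-- `L_a` commutes with `Q_a`: the anti-derivation law gives `Q_a L_a + L_a Q_a = 2 Q_{a,a²}`,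
and QJ2 identifies `Q_{a,a²}` with `L_a Q_a`, maps being composed left to right. -/
theorem mulOne_Q_comm (W : WeakQuadraticJordan k J)
    (hanti : ∀ a : J, W.IsEpsDerivation (-1) (W.Qbil W.one a)) (a c : J) :
    W.Qbil W.one a (W.Q a c) = W.Q a (W.Qbil W.one a c) := by
  have h := hanti a c a
  have h' := W.QJ2 a c W.one
  rw [W.Qbil_comm c, W.Qbil_one_swap c a] at h'
  rw [W.Qbil_one_self, map_smul, LinearMap.smul_apply, h'] at h
  rw [h]
  module

end WeakQuadraticJordan

/-- If `char k ≠ 2` and every `Q_{1,a}` is an anti-derivation, then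
`a · b := (1/2)·(a·Q_{1,b})` makes `J` a commutative unital algebra satisfying the
Jordan identity `a² · (b · a) = (a² · b) · a`; i.e. `(J,+,·)` is a linear Jordan algebra. -/
theorem linear_jordan_of_antiderivations {k J : Type*} [Field k] [AddCommGroup J] [Module k J]
    (W : WeakQuadraticJordan k J) (h2 : (2 : k) ≠ 0)
    (hanti : ∀ a : J, W.IsEpsDerivation (-1) (W.Qbil W.one a)) :
    (∀ a b : J, W.jmul a b = W.jmul b a) ∧
    (∀ a : J, W.jmul W.one a = a ∧ W.jmul a W.one = a) ∧
    (∀ a b : J, W.jmul (W.jmul a a) (W.jmul b a) = W.jmul (W.jmul (W.jmul a a) b) a) := by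
  have hcomm : ∀ a b : J, W.jmul a b = W.jmul b a := fun a b => by
    rw [WeakQuadraticJordan.jmul, WeakQuadraticJordan.jmul, W.Qbil_one_swap]
  have hone : ∀ a : J, W.jmul W.one a = a := fun a => by
    rw [WeakQuadraticJordan.jmul, W.Qbil_one_one, inv_smul_smul₀ h2]
  refine ⟨hcomm, fun a => ⟨hone a, by rw [hcomm, hone]⟩, fun a b => ?_⟩
  have hsq : W.jmul a a = W.Q a W.one := by
    rw [WeakQuadraticJordan.jmul, W.Qbil_one_self, inv_smul_smul₀ h2]
  have key : W.Qbil W.one (W.Q a W.one) (W.Qbil W.one a b) =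
      W.Qbil W.one a (W.Qbil W.one (W.Q a W.one) b) := by
    have h := W.two_smul_Q hanti a (W.Qbil W.one a b)
    rw [← W.mulOne_Q_comm hanti, ← map_smul, W.two_smul_Q hanti a b, map_sub] at h
    exact (sub_right_injective h).symm
  rw [hsq, hcomm (W.Q a W.one) (W.jmul b a), hcomm (W.Q a W.one) b]
  simp only [WeakQuadraticJordan.jmul, map_smul, key]
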